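/- Let G ⊂ Diff^1_+([0,1]) be a group such that every element g ∈ G satisfies Dg(x) = 1 at every fixed point x of g (G is without hyperbolic fixed points). Then G is without crossing, i.e., for every f, g ∈ G and every connected component (a,b) of [0,1] ∖ Fix(f), {g(a), g(b)} ∩ (a,b) = ∅. -/

import Mathlib

open Set Filter

noncomputable section

/-- `f` is an orientation-preserving C¹ diffeomorphism of `[0,1]`, modeled as a
bijection of `ℝ` that equals the identity outside `[0,1]`. -/
def DiffOnIcc (f : Equiv.Perm ℝ) : Prop :=
  (∀ x : ℝ, x ∉ Icc (0:ℝ) 1 → f x = x) ∧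
  MapsTo ⇑f (Icc (0:ℝ) 1) (Icc (0:ℝ) 1) ∧
  StrictMonoOn ⇑f (Icc (0:ℝ) 1) ∧
  ContDiffOn ℝ 1 ⇑f (Icc (0:ℝ) 1) ∧
  ContDiffOn ℝ 1 ⇑f.symm (Icc (0:ℝ) 1) ∧
  ∀ x ∈ Icc (0:ℝ) 1, 0 < derivWithin ⇑f (Icc (0:ℝ) 1) x

/-- The derivative (within `[0,1]`) of a diffeomorphism of `[0,1]`. -/
def D (f : Equiv.Perm ℝ) (x : ℝ) : ℝ := derivWithin ⇑f (Icc (0:ℝ) 1) x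

/-- `f` is an orientation-preserving homeomorphism of `[0,1]`, modeled as a
bijection of `ℝ` that equals the identity outside `[0,1]`. -/
def HomeoOnIcc (f : Equiv.Perm ℝ) : Prop :=
  (∀ x : ℝ, x ∉ Icc (0:ℝ) 1 → f x = x) ∧
  MapsTo ⇑f (Icc (0:ℝ) 1) (Icc (0:ℝ) 1) ∧
  StrictMonoOn ⇑f (Icc (0:ℝ) 1) ∧
  ContinuousOn ⇑f (Icc (0:ℝ) 1)

/-- `(a,b)` is a connected component of `[0,1] \ Fix f`: `a`, `b` are fixed and
there is no fixed point in between. -/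
def IsCompFix (f : Equiv.Perm ℝ) (a b : ℝ) : Prop :=
  a ∈ Icc (0:ℝ) 1 ∧ b ∈ Icc (0:ℝ) 1 ∧ a < b ∧ f a = a ∧ f b = b ∧
  ∀ x ∈ Ioo a b, f x ≠ x

/-- `{a,b}` is a pair of successive fixed points of the group `G`. -/
def SuccFix (G : Subgroup (Equiv.Perm ℝ)) (a b : ℝ) : Prop :=
  ∃ g ∈ G, IsCompFix g a b

namespace DiffOnIcc

variable {f g : Equiv.Perm ℝ}

theorem strictMono (hf : DiffOnIcc f) : StrictMono f := by
  obtain ⟨hout, hmaps, hmono, -⟩ := hf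
  intro x y hxy
  by_cases hx : x ∈ Icc (0:ℝ) 1 <;> by_cases hy : y ∈ Icc (0:ℝ) 1
  · exact hmono hx hy hxy
  · rw [hout y hy]
    have := hmaps hx
    simp only [mem_Icc, not_and, not_le] at hx hy this
    linarith [hy (by linarith)]
  · rw [hout x hx]
    have := hmaps hy
    simp only [mem_Icc, not_and, not_le] at hx hy this
    by_contra! hcon
    linarith [hx (by linarith)]
  · rwa [hout x hx, hout y hy]

theorem mapsTo (hf : DiffOnIcc f) : MapsTo f (Icc 0 1) (Icc 0 1) := hf.2.1

theorem continuousOn (hf : DiffOnIcc f) : ContinuousOn f (Icc 0 1) := hf.2.2.2.1.continuousOn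

theorem D_pos (hf : DiffOnIcc f) {x : ℝ} (hx : x ∈ Icc (0:ℝ) 1) : 0 < D f x :=
  hf.2.2.2.2.2 x hx

theorem hasDerivWithinAt (hf : DiffOnIcc f) {x : ℝ} (hx : x ∈ Icc (0:ℝ) 1) :
    HasDerivWithinAt f (D f x) (Icc 0 1) x :=
  (hf.2.2.2.1.differentiableOn one_ne_zero x hx).hasDerivWithinAt

theorem continuousOn_log_D (hf : DiffOnIcc f) :
    ContinuousOn (fun x => Real.log (D f x)) (Icc 0 1) :=
  (hf.2.2.2.1.continuousOn_derivWithin (uniqueDiffOn_Icc_zero_one) le_rfl).log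
    fun _ hx => (hf.D_pos hx).ne'

theorem log_D_mul (hf : DiffOnIcc f) (hg : DiffOnIcc g) {x : ℝ} (hx : x ∈ Icc (0:ℝ) 1) :
    Real.log (D (f * g) x) = Real.log (D f (g x)) + Real.log (D g x) := by
  have hD : D (f * g) x = D f (g x) * D g x :=
    ((hf.hasDerivWithinAt (hg.mapsTo hx)).comp x (hg.hasDerivWithinAt hx) hg.mapsTo).derivWithin
      (uniqueDiffOn_Icc_zero_one x hx)
  rw [hD, Real.log_mul (hf.D_pos (hg.mapsTo hx)).ne' (hg.D_pos hx).ne']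

/-- Mean value theorem on a subinterval of `[0,1]`. -/
theorem exists_D_eq_slope (hf : DiffOnIcc f) {p q : ℝ} (hp : 0 ≤ p) (hpq : p < q) (hq : q ≤ 1) :
    ∃ x ∈ Icc p q, D f x = (f q - f p) / (q - p) := by
  obtain ⟨x, hx, h⟩ := exists_hasDerivAt_eq_slope f (D f) hpq
    (hf.continuousOn.mono (Icc_subset_Icc hp hq)) fun x hx =>
      (hf.hasDerivWithinAt ⟨by linarith [hx.1], by linarith [hx.2]⟩).hasDerivAt
        (Icc_mem_nhds (by linarith [hx.1]) (by linarith [hx.2]))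
  exact ⟨x, Ioo_subset_Icc_self hx, h⟩

end DiffOnIcc

/-- A continuous function on a compact set is Lipschitz up to an arbitrarily small error. -/
theorem IsCompact.exists_sub_le_add_mul_dist {s : Set ℝ} (hs : IsCompact s) {u : ℝ → ℝ}
    (hu : ContinuousOn u s) {ε : ℝ} (hε : 0 < ε) :
    ∃ K, 0 ≤ K ∧ ∀ x ∈ s, ∀ y ∈ s, u x - u y ≤ ε + K * |x - y| := by
  obtain ⟨δ, hδ, hδu⟩ :=
    Metric.uniformContinuousOn_iff.1 (hs.uniformContinuousOn_of_continuous hu) ε hε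
  obtain ⟨M, hM⟩ := hs.exists_bound_of_continuousOn hu
  refine ⟨2 * |M| / δ, by positivity, fun x hx y hy => ?_⟩
  rcases lt_or_ge (dist x y) δ with h | h
  · have h₁ := hδu x hx y hy h
    rw [Real.dist_eq] at h₁
    have : 0 ≤ 2 * |M| / δ * |x - y| := by positivity
    linarith [le_abs_self (u x - u y)]
  · rw [Real.dist_eq] at h
    have h₁ : 2 * |M| / δ * δ ≤ 2 * |M| / δ * |x - y| := by gcongr
    rw [div_mul_cancel₀ _ hδ.ne'] at h₁
    have hx' := hM x hx
    have hy' := hM y hy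
    rw [Real.norm_eq_abs] at hx' hy'
    linarith [le_abs_self (u x), neg_abs_le (u y), le_abs_self M]

/-- The sum of `F` over all words of length `n` in two letters. -/
def wordSum : ℕ → (List Bool → ℝ) → ℝ
  | 0, F => F []
  | n + 1, F => wordSum n (fun l => F (true :: l)) + wordSum n (fun l => F (false :: l))

theorem wordSum_add (n : ℕ) (F F' : List Bool → ℝ) :
    wordSum n (fun l => F l + F' l) = wordSum n F + wordSum n F' := by
  induction n generalizing F F' with
  | zero => rfl
  | succ n ih => simp only [wordSum, ih]; ring

theorem wordSum_const_mul (n : ℕ) (c : ℝ) (F : List Bool → ℝ) :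
    wordSum n (fun l => c * F l) = c * wordSum n F := by
  induction n generalizing F with
  | zero => rfl
  | succ n ih => simp only [wordSum, ih]; ring

theorem exists_le_of_wordSum_le {n : ℕ} {F : List Bool → ℝ} {c : ℝ}
    (h : wordSum n F ≤ 2 ^ n * c) : ∃ l : List Bool, l.length = n ∧ F l ≤ c := by
  induction n generalizing F with
  | zero => exact ⟨[], rfl, by simpa [wordSum] using h⟩
  | succ n ih =>
    rw [wordSum, pow_succ] at h
    rcases le_total (wordSum n fun l => F (true :: l)) (2 ^ n * c) with h₁ | h₁
    · obtain ⟨l, hl, hF⟩ := ih h₁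
      exact ⟨true :: l, by simp [hl], hF⟩
    · obtain ⟨l, hl, hF⟩ := ih (F := fun l => F (false :: l)) (by linarith)
      exact ⟨false :: l, by simp [hl], hF⟩

/-- The composition of the maps `h i` along a word, the last letter acting first. -/
def wordPerm (h : Bool → Equiv.Perm ℝ) (l : List Bool) : Equiv.Perm ℝ := (l.map h).prod

theorem wordPerm_cons (h : Bool → Equiv.Perm ℝ) (i : Bool) (l : List Bool) :
    wordPerm h (i :: l) = h i * wordPerm h l := by
  simp [wordPerm]

theorem wordPerm_mem {G : Subgroup (Equiv.Perm ℝ)} {h : Bool → Equiv.Perm ℝ}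
    (hh : ∀ i, h i ∈ G) (l : List Bool) : wordPerm h l ∈ G :=
  Subgroup.list_prod_mem G fun _ hx => by
    obtain ⟨i, -, rfl⟩ := List.mem_map.1 hx
    exact hh i

theorem wordPerm_mapsTo {h : Bool → Equiv.Perm ℝ} {s : Set ℝ} (hs : ∀ i, MapsTo (h i) s s)
    (l : List Bool) : MapsTo (wordPerm h l) s s := by
  induction l with
  | nil => exact mapsTo_id s
  | cons i l ih =>
    rw [wordPerm_cons]
    exact (hs i).comp ih

/-- The total length of the images of `[p,q]` under the proper suffixes of a word. -/
def orbitLength (h : Bool → Equiv.Perm ℝ) (p q : ℝ) : List Bool → ℝ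
  | [] => 0
  | _ :: l => orbitLength h p q l + (wordPerm h l q - wordPerm h l p)

section PingPong

variable {h : Bool → Equiv.Perm ℝ} {p q : ℝ}

/-- The images of `[p,q]` under words of a fixed length are disjoint: their lengths, measured
through a monotone map, add up to at most the length of `[p,q]`. -/
theorem wordSum_length_le (hmono : ∀ i, Monotone (h i)) (hp : p ≤ h true p)
    (hlt : h true q ≤ h false p) (hq : h false q ≤ q) (n : ℕ) {φ : ℝ → ℝ} (hφ : Monotone φ) :
    wordSum n (fun l => φ (wordPerm h l q) - φ (wordPerm h l p)) ≤ φ q - φ p := by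
  induction n generalizing φ with
  | zero => simp [wordSum, wordPerm]
  | succ n ih =>
    simp only [wordSum, wordPerm_cons, Equiv.Perm.mul_apply]
    have h₁ := ih (hφ.comp (hmono true))
    have h₂ := ih (hφ.comp (hmono false))
    simp only [Function.comp_apply] at h₁ h₂
    linarith [hφ hp, hφ hlt, hφ hq]

theorem wordSum_orbitLength_le (hmono : ∀ i, Monotone (h i)) (hp : p ≤ h true p)
    (hlt : h true q ≤ h false p) (hq : h false q ≤ q) (n : ℕ) :
    wordSum n (orbitLength h p q) ≤ 2 * (q - p) * (2 ^ n - 1) := by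
  induction n with
  | zero => simp [wordSum, orbitLength]
  | succ n ih =>
    have hlen := wordSum_length_le hmono hp hlt hq n monotone_id
    simp only [id] at hlen
    simp only [wordSum, orbitLength, wordSum_add]
    rw [pow_succ]
    linarith

theorem log_D_wordPerm_sub_le (hdiff : ∀ l, DiffOnIcc (wordPerm h l))
    (hdiff' : ∀ i, DiffOnIcc (h i))
    (hpq : Icc p q ⊆ Icc 0 1) {ε K : ℝ} (hK : 0 ≤ K)
    (hdist : ∀ i, ∀ x ∈ Icc (0:ℝ) 1, ∀ y ∈ Icc (0:ℝ) 1,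
      Real.log (D (h i) x) - Real.log (D (h i) y) ≤ ε + K * |x - y|)
    (l : List Bool) {x y : ℝ} (hx : x ∈ Icc p q) (hy : y ∈ Icc p q) :
    Real.log (D (wordPerm h l) x) - Real.log (D (wordPerm h l) y) ≤
      l.length * ε + K * orbitLength h p q l := by
  induction l with
  | nil =>
    have hD : ∀ z ∈ Icc (0:ℝ) 1, D (wordPerm h []) z = 1 := fun z hz =>
      (hasDerivWithinAt_id z _).derivWithin (uniqueDiffOn_Icc_zero_one z hz)
    simp [hD x (hpq hx), hD y (hpq hy), orbitLength]
  | cons i l ih =>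
    have hl := hdiff l
    rw [wordPerm_cons, (hdiff' i).log_D_mul hl (hpq hx), (hdiff' i).log_D_mul hl (hpq hy)]
    have h₁ := hdist i _ (hl.mapsTo (hpq hx)) _ (hl.mapsTo (hpq hy))
    have h₂ : |wordPerm h l x - wordPerm h l y| ≤ wordPerm h l q - wordPerm h l p := by
      have hm := hl.strictMono.monotone
      rw [abs_le]
      constructor <;> linarith [hm hx.1, hm hx.2, hm hy.1, hm hy.2]
    have h₃ := mul_le_mul_of_nonneg_left h₂ hK
    simp only [List.length_cons, orbitLength]
    push_cast
    linarith

end PingPong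

/-- A group without hyperbolic fixed points contains no two maps sending an interval into
disjoint subintervals of itself. -/
theorem not_disjoint_images {G : Subgroup (Equiv.Perm ℝ)} (hG : ∀ g ∈ G, DiffOnIcc g)
    (hnh : ∀ g ∈ G, ∀ x ∈ Icc (0:ℝ) 1, g x = x → D g x = 1) {h₁ h₂ : Equiv.Perm ℝ}
    (hh₁ : h₁ ∈ G) (hh₂ : h₂ ∈ G) {p q : ℝ} (hp₀ : 0 ≤ p) (hpq : p < q) (hq₁ : q ≤ 1)
    (hp : p ≤ h₁ p) (hlt : h₁ q ≤ h₂ p) (hq : h₂ q ≤ q) : False := by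
  let h : Bool → Equiv.Perm ℝ := fun i => bif i then h₁ else h₂
  have hmem : ∀ i, h i ∈ G := by rintro (_ | _) <;> assumption
  have hdiff' : ∀ i, DiffOnIcc (h i) := fun i => hG _ (hmem i)
  have hdiff : ∀ l, DiffOnIcc (wordPerm h l) := fun l => hG _ (wordPerm_mem hmem l)
  have hmono : ∀ i, Monotone (h i) := fun i => (hdiff' i).strictMono.monotone
  have hsub : Icc p q ⊆ Icc 0 1 := Icc_subset_Icc hp₀ hq₁
  have hmaps : ∀ i, MapsTo (h i) (Icc p q) (Icc p q) := by
    have m₁ := (hG _ hh₁).strictMono.monotone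
    have m₂ := (hG _ hh₂).strictMono.monotone
    rintro (_ | _) x ⟨hx, hx'⟩
    · exact ⟨hp.trans ((m₁ hpq.le).trans (hlt.trans (m₂ hx))), (m₂ hx').trans hq⟩
    · exact ⟨hp.trans (m₁ hx), (m₁ hx').trans (hlt.trans ((m₂ hpq.le).trans hq))⟩
  obtain ⟨K, hK, hdist⟩ : ∃ K, 0 ≤ K ∧ ∀ i, ∀ x ∈ Icc (0:ℝ) 1, ∀ y ∈ Icc (0:ℝ) 1,
      Real.log (D (h i) x) - Real.log (D (h i) y) ≤ 1 / 2 + K * |x - y| := by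
    choose K hK hKd using fun i => isCompact_Icc.exists_sub_le_add_mul_dist
      (hdiff' i).continuousOn_log_D (one_half_pos (α := ℝ))
    refine ⟨K true + K false, add_nonneg (hK _) (hK _), fun i x hx y hy =>
      (hKd i x hx y hy).trans ?_⟩
    gcongr
    cases i <;> linarith [hK true, hK false]
  have hd : 0 < q - p := sub_pos.2 hpq
  have hlog2 := Real.log_two_gt_d9
  obtain ⟨n, hn⟩ := exists_nat_gt ((Real.log 2 + K * (4 * (q - p))) / (1 / 10))
  rw [div_lt_iff₀ (by norm_num)] at hn
  obtain ⟨l, hl, hlF⟩ : ∃ l : List Bool, l.length = n ∧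
      2 ^ n / (q - p) * (wordPerm h l q - wordPerm h l p) +
        1 / (2 * (q - p)) * orbitLength h p q l ≤ 2 := by
    apply exists_le_of_wordSum_le
    rw [wordSum_add, wordSum_const_mul, wordSum_const_mul]
    have e₁ := wordSum_length_le hmono hp hlt hq n monotone_id
    have e₂ := wordSum_orbitLength_le hmono hp hlt hq n
    simp only [id] at e₁
    calc _ ≤ 2 ^ n / (q - p) * (q - p) + 1 / (2 * (q - p)) * (2 * (q - p) * (2 ^ n - 1)) := by
          gcongr
      _ ≤ 2 ^ n * 2 := by
          field_simp
          linarith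
  set w := wordPerm h l
  have horbit : 0 ≤ orbitLength h p q l := by
    clear hl hlF w
    induction l with
    | nil => exact le_rfl
    | cons i l ih => exact add_nonneg ih (sub_nonneg.2 ((hdiff l).strictMono.monotone hpq.le))
  have hwlen : 0 < w q - w p := sub_pos.2 ((hdiff l).strictMono hpq)
  have hwmaps : MapsTo w (Icc p q) (Icc p q) := wordPerm_mapsTo hmaps l
  obtain ⟨x, hx, hfix⟩ := exists_mem_Icc_isFixedPt_of_mapsTo
    ((hdiff l).continuousOn.mono hsub) hpq.le hwmaps
  obtain ⟨ξ, hξ, hslope⟩ := (hdiff l).exists_D_eq_slope hp₀ hpq hq₁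
  have hbound := log_D_wordPerm_sub_le hdiff hdiff' hsub hK hdist l hx hξ
  have hDx : D w x = 1 := hnh w (wordPerm_mem hmem l) x (hsub hx) hfix
  change D w ξ = (w q - w p) / (q - p) at hslope
  rw [hDx, Real.log_one, hslope, hl] at hbound
  have t₁ : 0 ≤ 1 / (2 * (q - p)) * orbitLength h p q l := by positivity
  have t₂ : 0 ≤ 2 ^ n / (q - p) * (w q - w p) := by positivity
  have horbit_le : orbitLength h p q l ≤ 4 * (q - p) := by
    have : 1 / (2 * (q - p)) * orbitLength h p q l ≤ 2 := by linarith
    rw [one_div, inv_mul_le_iff₀ (by positivity)] at this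
    linarith
  have hlen_le : Real.log ((w q - w p) / (q - p)) + n * Real.log 2 ≤ Real.log 2 := by
    rw [← Real.log_pow, ← Real.log_mul (by positivity) (by positivity)]
    apply Real.log_le_log (by positivity)
    calc _ = 2 ^ n / (q - p) * (w q - w p) := by ring
      _ ≤ 2 := by linarith
  have hKo := mul_le_mul_of_nonneg_left horbit_le hK
  have hn2 : (n : ℝ) * (6 / 10) ≤ n * Real.log 2 := by gcongr; linarith
  linarith

/-- A diffeomorphism moving the points of a component of the complement of its fixed points to
the left pushes every point of this component below any other one. -/
theorem IsCompFix.exists_pow_lt {f : Equiv.Perm ℝ} {a b : ℝ} (hf : DiffOnIcc f)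
    (hab : IsCompFix f a b) (hlt : ∀ x ∈ Ioo a b, f x < x) {x y : ℝ} (hx : x ∈ Ioo a b)
    (hy : y ∈ Ioo a b) : ∃ n : ℕ, (f ^ n) x < y := by
  obtain ⟨ha, hb, -, hfa, -, hne⟩ := hab
  by_contra! hcon
  simp only [Equiv.Perm.coe_pow] at hcon
  have hxb : ∀ n, f^[n] x < b := fun n => by
    induction n with
    | zero => exact hx.2
    | succ n ih =>
      rw [Function.iterate_succ_apply']
      exact (hlt _ ⟨hy.1.trans_le (hcon n), ih⟩).trans ih
  have hanti : Antitone fun n => f^[n] x := antitone_nat_of_succ_le fun n => by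
    rw [Function.iterate_succ_apply']
    exact (hlt _ ⟨hy.1.trans_le (hcon n), hxb n⟩).le
  have hbdd : BddBelow (range fun n => f^[n] x) := ⟨y, by rintro _ ⟨n, rfl⟩; exact hcon n⟩
  have hlim := tendsto_atTop_ciInf hanti hbdd
  set L := ⨅ n, f^[n] x
  have hL : L ∈ Ioo a b := ⟨hy.1.trans_le (le_ciInf hcon), (ciInf_le hbdd 0).trans_lt hx.2⟩
  have hcont : ContinuousAt f L := hf.continuousOn.continuousAt
    (Icc_mem_nhds (ha.1.trans_lt hL.1) (hL.2.trans_le hb.2))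
  exact hne L hL (isFixedPt_of_tendsto_iterate hlim hcont)

/-- On a component of the complement of its fixed points, a diffeomorphism or its inverse moves
all points to the left. -/
theorem IsCompFix.lt_or_inv_lt {f : Equiv.Perm ℝ} {a b : ℝ} (hf : DiffOnIcc f)
    (hab : IsCompFix f a b) :
    (∀ x ∈ Ioo a b, f x < x) ∨
      IsCompFix f⁻¹ a b ∧ ∀ x ∈ Ioo a b, f⁻¹ x < x := by
  obtain ⟨ha, hb, hlt, hfa, hfb, hne⟩ := hab
  have hinv : ∀ x, f⁻¹ x = x ↔ f x = x := fun x => by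
    rw [Equiv.Perm.inv_eq_iff_eq, eq_comm]
  by_cases hall : ∀ x ∈ Ioo a b, f x < x
  · exact Or.inl hall
  · push Not at hall
    obtain ⟨x, hx, hfx⟩ := hall
    refine Or.inr ⟨⟨ha, hb, hlt, (hinv a).2 hfa, (hinv b).2 hfb,
      fun z hz => (hinv z).not.2 (hne z hz)⟩, fun z hz => ?_⟩
    have hz' : f⁻¹ z ∈ Ioo a b := by
      constructor <;> rw [← hf.strictMono.lt_iff_lt, Equiv.Perm.inv_def, Equiv.apply_symm_apply]
      · rw [hfa]; exact hz.1
      · rw [hfb]; exact hz.2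
    by_contra! hcon
    have hcon' : f (f⁻¹ z) ≤ f⁻¹ z := by rwa [Equiv.Perm.inv_def, Equiv.apply_symm_apply]
    obtain ⟨c, hc, hfc⟩ := isPreconnected_Ioo.intermediate_value₂ hz' hx
      (hf.continuousOn.mono fun t ht => ⟨ha.1.trans ht.1.le, ht.2.le.trans hb.2⟩)
      continuousOn_id hcon' hfx
    exact hne c hc hfc

/-- a group of C¹ diffeomorphisms of `[0,1]` without hyperbolic
fixed points is without crossing. -/
theorem stmt10 (G : Subgroup (Equiv.Perm ℝ)) (hG : ∀ g ∈ G, DiffOnIcc g)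
    (hnh : ∀ g ∈ G, ∀ x ∈ Icc (0:ℝ) 1, g x = x → D g x = 1) :
    ∀ f ∈ G, ∀ g ∈ G, ∀ a b : ℝ, IsCompFix f a b →
      g a ∉ Ioo a b ∧ g b ∉ Ioo a b := by
  intro f hf g hg a b hab
  wlog hlt : ∀ x ∈ Ioo a b, f x < x generalizing f
  · obtain h | ⟨h, h'⟩ := hab.lt_or_inv_lt (hG f hf)
    · exact absurd h hlt
    · exact this f⁻¹ (G.inv_mem hf) h h'
  obtain ⟨ha, hb, -, hfa, hfb, -⟩ := id hab
  have hpow : ∀ n : ℕ, f ^ n ∈ G := fun n => G.pow_mem hf n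
  have hpmono : ∀ n : ℕ, StrictMono (f ^ n) := fun n => (hG _ (hpow n)).strictMono
  have hpa : ∀ n : ℕ, (f ^ n) a = a := fun n => by
    rw [Equiv.Perm.coe_pow]; exact Function.iterate_fixed hfa n
  have hpb : ∀ n : ℕ, (f ^ n) b = b := fun n => by
    rw [Equiv.Perm.coe_pow]; exact Function.iterate_fixed hfb n
  have hgm := (hG g hg).strictMono
  constructor
  · intro hc
    obtain ⟨d, hcd, hdb⟩ := exists_between hc.2
    have had : a < g⁻¹ d := by rwa [← hgm.lt_iff_lt, Equiv.Perm.inv_def, Equiv.apply_symm_apply]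
    obtain ⟨y, hay, hy⟩ := exists_between (lt_min had (hc.1.trans hc.2))
    have hyb := hy.trans_le (min_le_right _ _)
    have hgy : g y < b := by
      have := hgm (hy.trans_le (min_le_left _ _))
      rw [Equiv.Perm.inv_def, Equiv.apply_symm_apply] at this
      exact this.trans hdb
    have hgy' : g y ∈ Ioo a b := ⟨hc.1.trans (hgm hay), hgy⟩
    obtain ⟨N, hN⟩ := hab.exists_pow_lt (hG f hf) hlt hgy' ⟨hay, hyb⟩
    have hNc : (f ^ N) (g a) ∈ Ioo a b :=
      ⟨(hpa N).symm.trans_lt (hpmono N hc.1), (hpmono N hc.2).trans_eq (hpb N)⟩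
    obtain ⟨M, hM⟩ := hab.exists_pow_lt (hG f hf) hlt hgy' hNc
    exact not_disjoint_images hG hnh (G.mul_mem (hpow M) hg) (G.mul_mem (hpow N) hg)
      ha.1 hay (hyb.le.trans hb.2) ((hpa M).symm.trans_le ((hpmono M).monotone hc.1.le))
      hM.le hN.le
  · intro hc
    obtain ⟨d, had, hdc⟩ := exists_between hc.1
    have hdb : g⁻¹ d < b := by rwa [← hgm.lt_iff_lt, Equiv.Perm.inv_def, Equiv.apply_symm_apply]
    obtain ⟨y, hy, hyb⟩ := exists_between (max_lt hdb (hc.1.trans hc.2))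
    have hay := (le_max_right _ _).trans_lt hy
    have hgy : a < g y := by
      have := hgm ((le_max_left _ _).trans_lt hy)
      rw [Equiv.Perm.inv_def, Equiv.apply_symm_apply] at this
      exact had.trans this
    have hgy' : g y ∈ Ioo a b := ⟨hgy, (hgm hyb).trans hc.2⟩
    have hinv : ∀ (n : ℕ) {s t : ℝ}, (f ^ n) s < t → s < (f ^ n)⁻¹ t := fun n s t hst => by
      rwa [← (hpmono n).lt_iff_lt, Equiv.Perm.inv_def, Equiv.apply_symm_apply]
    have hinv' : ∀ (n : ℕ) {s t : ℝ}, s < (f ^ n) t → (f ^ n)⁻¹ s < t := fun n s t hst => by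
      rwa [← (hpmono n).lt_iff_lt, Equiv.Perm.inv_def, Equiv.apply_symm_apply]
    obtain ⟨N, hN⟩ := hab.exists_pow_lt (hG f hf) hlt ⟨hay, hyb⟩ hgy'
    have hNc : (f ^ N)⁻¹ (g b) ∈ Ioo a b :=
      ⟨hinv N ((hpa N).trans_lt hc.1), hinv' N (hc.2.trans_eq (hpb N).symm)⟩
    obtain ⟨M, hM⟩ := hab.exists_pow_lt (hG f hf) hlt hNc hgy'
    exact not_disjoint_images hG hnh (G.mul_mem (G.inv_mem (hpow N)) hg)
      (G.mul_mem (G.inv_mem (hpow M)) hg) (ha.1.trans hay.le) hyb hb.2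
      (hinv N hN).le (hinv M hM).le (hinv' M (hc.2.trans_eq (hpb M).symm)).le
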